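/- arXiv:2006.02874 — 4 statements merged into one kernel-verified Lean document; each statement's English description precedes it below -/
import Mathlib

section
/- Let p be a natural number ending in 1 and suppose p = (10A+9)(10B+9) for some natural numbers A, B ≥ 1. Then there exist a natural number M ≥ 1 and an integer N with |N| < M and gcd(|N|, M) = 1 such that 200·M·(A·B) = (p−81)·(M+N), 180·M·(A+B) = (p−81)·(M−N), and (N:ℝ)/M ≤ 1 − 36/(√p + 9). -/
/-!
Put `x = 100AB` and `y = 90(A + B)`, so that `p - 81 = x + y`. The two product equations say exactly
that `N / M` is the fraction `(x - y) / (x + y)`, which we write in lowest terms. The upper bound on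
`N / M = 1 - 2y / (x + y)` is then the AM-GM inequality for the factors `10A + 9` and `10B + 9`,
because `p - 81 = (√p - 9)(√p + 9)`.
-/

theorem abs_num_lt_den_iff {q : ℚ} : |q.num| < (q.den : ℤ) ↔ |q| < 1 := by
  rw [← Rat.num_abs_eq_abs_num, ← Rat.den_abs_eq_den, Rat.num_lt_denom_iff]

theorem abs_sub_div_add_lt_one {K : Type*} [Field K] [LinearOrder K] [IsStrictOrderedRing K]
    {x y : K} (hx : 0 < x) (hy : 0 < y) : |(x - y) / (x + y)| < 1 := by
  have hxy : 0 < x + y := add_pos hx hy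
  rw [abs_div, abs_of_pos hxy, div_lt_one hxy, abs_lt]
  constructor <;> linarith

theorem exists_coprime_add_sub_proportional {x y : ℤ} (hx : 0 < x) (hy : 0 < y) :
    ∃ (M : ℕ) (N : ℤ), 1 ≤ M ∧ |N| < (M : ℤ) ∧ Nat.gcd N.natAbs M = 1 ∧
      2 * (M : ℤ) * x = (x + y) * (M + N) ∧ 2 * (M : ℤ) * y = (x + y) * (M - N) := by
  set q : ℚ := (x - y) / (x + y) with hq
  have hxy : (x + y : ℚ) ≠ 0 := by exact_mod_cast (add_pos hx hy).ne'
  have hden : (q.den : ℚ) ≠ 0 := by exact_mod_cast q.den_nz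
  have cross_mul : q.num * (x + y) = (x - y) * q.den := by
    have hfrac : (q.num : ℚ) / q.den = (x - y) / (x + y) := (Rat.num_div_den q).trans hq
    exact_mod_cast (div_eq_div_iff hden hxy).mp hfrac
  have hq_lt : |q| < 1 :=
    abs_sub_div_add_lt_one (Int.cast_pos.mpr hx) (Int.cast_pos.mpr hy)
  refine ⟨q.den, q.num, q.den_pos, abs_num_lt_den_iff.mpr hq_lt, q.reduced, ?_, ?_⟩
  · linear_combination -cross_mul
  · linear_combination cross_mul

theorem sqrt_mul_le_half_add {a b : ℝ} (hab : 0 ≤ a + b) : √(a * b) ≤ (a + b) / 2 := by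
  rw [Real.sqrt_le_left (div_nonneg hab zero_le_two)]
  linarith [four_mul_le_sq_add a b]

theorem two_div_sqrt_mul_add_le {a b c : ℝ} (hab : 0 ≤ a + b) (hc : c ^ 2 < a * b) :
    2 / (√(a * b) + c) ≤ (a + b - 2 * c) / (a * b - c ^ 2) := by
  have hsqrt : √(a * b) ^ 2 = a * b := Real.sq_sqrt ((sq_nonneg c).trans hc.le)
  have hsub : 0 < √(a * b) - c := sub_pos.mpr (Real.lt_sqrt_of_sq_lt hc)
  calc 2 / (√(a * b) + c) = 2 * (√(a * b) - c) / ((√(a * b) + c) * (√(a * b) - c)) :=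
        (mul_div_mul_right _ _ hsub.ne').symm
    _ = 2 * (√(a * b) - c) / (a * b - c ^ 2) := by rw [← sq_sub_sq, hsqrt]
    _ ≤ (a + b - 2 * c) / (a * b - c ^ 2) := by
        have hnum : 2 * (√(a * b) - c) ≤ a + b - 2 * c := by linarith [sqrt_mul_le_half_add hab]
        exact div_le_div_of_nonneg_right hnum (sub_pos.mpr hc).le

theorem stmt_0 (p A B : ℕ) (hp : p % 10 = 1) (hA : 1 ≤ A) (hB : 1 ≤ B)
    (hfac : p = (10 * A + 9) * (10 * B + 9)) :
    ∃ (M : ℕ) (N : ℤ), 1 ≤ M ∧ |N| < (M : ℤ) ∧ Nat.gcd N.natAbs M = 1 ∧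
      200 * (M : ℤ) * (A * B) = ((p : ℤ) - 81) * ((M : ℤ) + N) ∧
      180 * (M : ℤ) * (A + B) = ((p : ℤ) - 81) * ((M : ℤ) - N) ∧
      (N : ℝ) / (M : ℝ) ≤ 1 - 36 / (Real.sqrt p + 9) := by
  have hsplit : (p : ℤ) - 81 = 100 * (A * B) + 90 * (A + B) := by rw [hfac]; push_cast; ring
  obtain ⟨M, N, hM, hNM, hcop, hprod, hsum⟩ :=
    exists_coprime_add_sub_proportional (x := 100 * (A * B)) (y := 90 * (A + B))
      (by positivity) (by positivity)
  rw [← hsplit] at hprod hsum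
  refine ⟨M, N, hM, hNM, hcop, by linarith, by linarith, ?_⟩
  have hp_real : (p : ℝ) = (10 * A + 9) * (10 * B + 9) := by exact_mod_cast hfac
  have hp_gt : (9 : ℝ) ^ 2 < (10 * A + 9) * (10 * B + 9) := by
    linarith [show (0 : ℝ) < 100 * (A * B) + 90 * (A + B) by positivity]
  have hp_sub : (p : ℝ) - 9 ^ 2 ≠ 0 := by linarith
  have hsum_real : 2 * (M : ℝ) * (90 * (A + B)) = (p - 81) * (M - N) := by exact_mod_cast hsum
  calc (N : ℝ) / M = 1 - 18 * ((10 * A + 9 + (10 * B + 9) - 2 * 9) / (p - 9 ^ 2)) := by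
        field_simp
        linear_combination hsum_real
    _ ≤ 1 - 18 * (2 / (√p + 9)) := by
        rw [hp_real]
        gcongr 1 - 18 * ?_
        exact two_div_sqrt_mul_add_le (by positivity) hp_gt
    _ = 1 - 36 / (√p + 9) := by ring
end

section
/- Let p = (10A+9)(10B+9) for natural numbers A, B ≥ 1. Then there exist a natural number M and an integer N with |N| < M, where M = (p−81)/10 or M = (p−81)/20, such that the rational numbers λ₂ = 20M²/((N²+M²)(p−81)) and λ₁ = −20NM/((N²+M²)(p−81)) satisfy (λ₂ − 10/(p−81))² + λ₁² = (10/(p−81))², and moreover (1,1) = λ₁·(9(A+B), −10AB) + λ₂·(10AB, 9(A+B)) as vectors in ℚ². -/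
/-!
Put `x = 10AB`, `y = 9(A + B)`, so that `p - 81 = 10(x + y)`, and take `M = x + y`, `N = x - y`.
Identify `ℚ²` with `ℚ(i)` and let `z = x + iy`. Then `(y, -x)` is `-iz`, so the decomposition
asks for `λ₂ - iλ₁ = (1 + i) / z = 2 / (M - iN)`. As `N` varies, `M - iN` runs over the vertical
line with real part `M`, which inversion maps to a circle through the origin: the points
`2 / (M - iN)` lie on the circle with centre and radius `1 / M = 10 / (p - 81)`.
-/

section Field

variable {K : Type*} [Field K]

theorem circle_equation_of_inversion {m n : K} (hm : m ≠ 0) (hnm : n ^ 2 + m ^ 2 ≠ 0) :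
    (2 * m / (n ^ 2 + m ^ 2) - 1 / m) ^ 2 + (-(2 * n) / (n ^ 2 + m ^ 2)) ^ 2 = (1 / m) ^ 2 := by
  field_simp
  ring

theorem eq_smul_rotate_add_smul {x y : K} (hxy : x ^ 2 + y ^ 2 ≠ 0) (u v : K) :
    (u, v) = ((u * y - v * x) / (x ^ 2 + y ^ 2)) • (y, -x) +
      ((u * x + v * y) / (x ^ 2 + y ^ 2)) • (x, y) := by
  ext
  · simp only [Prod.fst_add, Prod.smul_fst, smul_eq_mul]
    field_simp
    ring
  · simp only [Prod.snd_add, Prod.smul_snd, smul_eq_mul]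
    field_simp
    ring

theorem one_one_eq_smul_rotate_add_smul {x y : K} (h : (x - y) ^ 2 + (x + y) ^ 2 ≠ 0) :
    ((1 : K), (1 : K)) = (-(2 * (x - y)) / ((x - y) ^ 2 + (x + y) ^ 2)) • (y, -x) +
      (2 * (x + y) / ((x - y) ^ 2 + (x + y) ^ 2)) • (x, y) := by
  have hsum : (x - y) ^ 2 + (x + y) ^ 2 = 2 * (x ^ 2 + y ^ 2) := by ring
  rw [hsum] at h ⊢
  obtain ⟨h2, hxy⟩ := mul_ne_zero_iff.mp h
  rw [← mul_neg, mul_div_mul_left _ _ h2, mul_div_mul_left _ _ h2]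
  convert eq_smul_rotate_add_smul hxy 1 1 using 4 <;> ring

end Field

theorem stmt_1 (p A B : ℕ) (hA : 1 ≤ A) (hB : 1 ≤ B)
    (hfac : p = (10 * A + 9) * (10 * B + 9)) :
    ∃ (M : ℕ) (N : ℤ), |N| < (M : ℤ) ∧
      (M = (p - 81) / 10 ∨ M = (p - 81) / 20) ∧
      (let lam2 : ℚ := 20 * (M : ℚ) ^ 2 / (((N : ℚ) ^ 2 + (M : ℚ) ^ 2) * ((p : ℚ) - 81));
       let lam1 : ℚ := -(20 * (N : ℚ) * (M : ℚ)) / (((N : ℚ) ^ 2 + (M : ℚ) ^ 2) * ((p : ℚ) - 81));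
       (lam2 - 10 / ((p : ℚ) - 81)) ^ 2 + lam1 ^ 2 = (10 / ((p : ℚ) - 81)) ^ 2 ∧
       ((1 : ℚ), (1 : ℚ)) =
         lam1 • ((9 * ((A : ℚ) + B), -(10 * (A : ℚ) * B)) : ℚ × ℚ) +
         lam2 • ((10 * (A : ℚ) * B, 9 * ((A : ℚ) + B)) : ℚ × ℚ)) := by
  obtain ⟨x, hx⟩ : ∃ x, x = 10 * A * B := ⟨_, rfl⟩
  obtain ⟨y, hy⟩ : ∃ y, y = 9 * (A + B) := ⟨_, rfl⟩
  have hx_pos : 0 < x := by rw [hx]; positivity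
  have hy_pos : 0 < y := by rw [hy]; positivity
  have hp : p = 10 * (x + y) + 81 := by rw [hfac, hx, hy]; ring
  refine ⟨x + y, x - y, by rw [abs_sub_lt_iff]; omega, Or.inl (by omega), ?_⟩
  have hpQ : (p : ℚ) - 81 = 10 * (x + y) := by simp [hp]
  have hxQ : 10 * (A : ℚ) * B = x := by simp [hx]
  have hyQ : 9 * ((A : ℚ) + B) = y := by simp [hy]
  have hM : (x + y : ℚ) ≠ 0 := by positivity
  have hNM : (x - y : ℚ) ^ 2 + (x + y) ^ 2 ≠ 0 := by positivity
  have hlam2 : 20 * (x + y : ℚ) ^ 2 / (((x - y) ^ 2 + (x + y) ^ 2) * (10 * (x + y))) =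
      2 * (x + y) / ((x - y) ^ 2 + (x + y) ^ 2) := by field_simp; ring
  have hlam1 : -(20 * (x - y : ℚ) * (x + y)) / (((x - y) ^ 2 + (x + y) ^ 2) * (10 * (x + y))) =
      -(2 * (x - y)) / ((x - y) ^ 2 + (x + y) ^ 2) := by field_simp; ring
  have hr : 10 / (10 * (x + y) : ℚ) = 1 / (x + y) := by field_simp
  push_cast
  rw [hpQ, hxQ, hyQ, hlam2, hlam1, hr]
  exact ⟨circle_equation_of_inversion hM hNM, one_one_eq_smul_rotate_add_smul hNM⟩
end

section
/- Let p be a natural number ending in 1 and suppose p = (10A+1)(10B+1) for some natural numbers A, B ≥ 1. Then there exist a natural number M ≥ 1 and an integer N with |N| < M and gcd(|N|, M) = 1 such that 200·M·(A·B) = (p−1)·(M+N), 20·M·(A+B) = (p−1)·(M−N), and (N:ℝ)/M ≤ 1 − 4/(√p + 1). -/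
/-!
For `p = (a + 1) * (b + 1)` we have `p - 1 = a * b + (a + b)`. Take `N / M` to be the reduced form
of `(a * b - (a + b)) / (p - 1) = 1 - 2 * (a + b) / (p - 1)`. By AM-GM,
`a + b ≥ 2 * (√p - 1)`; dividing by `p - 1 = (√p - 1) * (√p + 1)` gives the bound on `N / M`.
-/

theorem exists_coprime_mul_eq_mul_of_abs_lt {m n : ℤ} (hmn : |m| < n) :
    ∃ (M : ℕ) (N : ℤ), 1 ≤ M ∧ |N| < M ∧ N.gcd M = 1 ∧ m * M = n * N := by
  have hn : 0 < n := (abs_nonneg m).trans_lt hmn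
  obtain ⟨g, N, M, _, coprime, rfl, rfl⟩ :=
    Int.exists_gcd_one' (Int.gcd_pos_of_ne_zero_right m hn.ne')
  have hM : 0 < M := pos_of_mul_pos_left hn g.cast_nonneg
  have hNM : |N| < M := by
    rw [abs_mul, Nat.abs_cast] at hmn
    exact lt_of_mul_lt_mul_right hmn g.cast_nonneg
  lift M to ℕ using hM.le
  exact ⟨M, N, by exact_mod_cast hM, hNM, coprime, by ring⟩

theorem four_div_sqrt_mul_add_one_le {x y : ℝ} (hx : 0 ≤ x) (hy : 0 ≤ y) (hxy : 1 < x * y) :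
    4 / (√(x * y) + 1) ≤ 2 * (x + y - 2) / (x * y - 1) := by
  have sq_sqrt : √(x * y) ^ 2 = x * y := Real.sq_sqrt (mul_nonneg hx hy)
  have am_gm : 2 * √(x * y) ≤ x + y := two_mul_le_add_of_sq_le_mul hx hy sq_sqrt.le
  have sqrt_sub_one_pos : 0 < √(x * y) - 1 := sub_pos.mpr (Real.lt_sqrt_of_sq_lt (by simpa))
  have factor : x * y - 1 = (√(x * y) - 1) * (√(x * y) + 1) := by linear_combination -sq_sqrt
  calc 4 / (√(x * y) + 1)
      = 2 * (2 * √(x * y) - 2) / (x * y - 1) := by rw [factor]; field_simp; ring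
    _ ≤ 2 * (x + y - 2) / (x * y - 1) := by
      have := sub_pos.mpr hxy
      gcongr

theorem stmt_3_general (p a b : ℕ) (ha : 1 ≤ a) (hb : 1 ≤ b) (hfac : p = (a + 1) * (b + 1)) :
    ∃ (M : ℕ) (N : ℤ), 1 ≤ M ∧ |N| < (M : ℤ) ∧ Nat.gcd N.natAbs M = 1 ∧
      2 * (M : ℤ) * (a * b) = ((p : ℤ) - 1) * ((M : ℤ) + N) ∧
      2 * (M : ℤ) * (a + b) = ((p : ℤ) - 1) * ((M : ℤ) - N) ∧
      (N : ℝ) / (M : ℝ) ≤ 1 - 4 / (Real.sqrt p + 1) := by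
  have hp : (p : ℤ) - 1 = a * b + (a + b) := by rw [hfac]; push_cast; ring
  have abs_sub_lt : |(a * b - (a + b) : ℤ)| < p - 1 := by
    have : (0 : ℤ) < a * b := by positivity
    grind
  obtain ⟨M, N, hM, hNM, coprime, ratio⟩ := exists_coprime_mul_eq_mul_of_abs_lt abs_sub_lt
  refine ⟨M, N, hM, hNM, coprime, ?_, ?_, ?_⟩
  · linear_combination ratio - M * hp
  · linear_combination -ratio - M * hp
  have hp_real : (p : ℝ) = (a + 1) * (b + 1) := by exact_mod_cast hfac
  have one_lt_p : 1 < (a + 1 : ℝ) * (b + 1) := one_lt_mul_of_lt_of_le (by simpa) (by simp)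
  have p_sub_one_ne : (p : ℝ) - 1 ≠ 0 := by rw [hp_real]; exact (sub_pos.mpr one_lt_p).ne'
  have ratio_real : (a * b - (a + b) : ℝ) * M = (p - 1) * N := by exact_mod_cast ratio
  calc (N : ℝ) / M
      = (a * b - (a + b)) / (p - 1) := by
        field_simp
        linear_combination -ratio_real
    _ = 1 - 2 * ((a + 1) + (b + 1) - 2) / (p - 1) := by
        field_simp
        linear_combination -hp_real
    _ ≤ 1 - 4 / (√p + 1) := by
        rw [hp_real]
        exact sub_le_sub_left
          (four_div_sqrt_mul_add_one_le (by positivity) (by positivity) one_lt_p) 1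

theorem stmt_3 (p A B : ℕ) (hp : p % 10 = 1) (hA : 1 ≤ A) (hB : 1 ≤ B)
    (hfac : p = (10 * A + 1) * (10 * B + 1)) :
    ∃ (M : ℕ) (N : ℤ), 1 ≤ M ∧ |N| < (M : ℤ) ∧ Nat.gcd N.natAbs M = 1 ∧
      200 * (M : ℤ) * (A * B) = ((p : ℤ) - 1) * ((M : ℤ) + N) ∧
      20 * (M : ℤ) * (A + B) = ((p : ℤ) - 1) * ((M : ℤ) - N) ∧
      (N : ℝ) / (M : ℝ) ≤ 1 - 4 / (Real.sqrt p + 1) := by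
  obtain ⟨M, N, hM, hNM, coprime, hprod, hsum, bound⟩ :=
    stmt_3_general p (10 * A) (10 * B) (by lia) (by lia) hfac
  push_cast at hprod hsum
  exact ⟨M, N, hM, hNM, coprime, by linarith, by linarith, bound⟩
end

section
/- Let p be a natural number with p ≡ 1 (mod 10) and 9 ∣ p+10, and suppose p = (10A+9)(10B+9) for natural numbers A, B with 10 ≤ A < B. Set D = (p−71)/90 (a natural number). Then there exists a natural number λ such that D − B − A + 1 = 10λ, 1 + A·B = 9λ, and D + 1 − 101²·p/10⁶ ≤ λ ≤ (D+1)/10 + (9 − √p)/50 (as real numbers). -/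
/-!
Modulo `9` the number `p + 10` is `1 + A * B`, which makes `λ` an integer, and expanding `p` gives
`D + 1 = 10 * λ + A + B`. The lower bound says `(A + 1) * (B + 1) ≤ 101 ^ 2 * p / 10 ^ 6`, because
the left-hand side is `D + 1 - λ`; it holds factor by factor. The upper bound is the AM-GM
inequality for `10 * A + 9` and `10 * B + 9`.
-/

theorem dvd_mul_add_succ_iff_dvd_one_add_mul (k a b : ℕ) :
    k ∣ ((k + 1) * a + k) * ((k + 1) * b + k) + (k + 1) ↔ k ∣ 1 + a * b := by
  have expand : ((k + 1) * a + k) * ((k + 1) * b + k) + (k + 1) =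
      1 + a * b + k * ((k + 2) * (a * b) + (k + 1) * (a + b + 1)) := by
    ring
  rw [expand, Nat.dvd_add_left (dvd_mul_right k _)]

theorem mul_add_two_mul_add_one_eq_of_one_add_mul_eq {R : Type*} [CommSemiring R] {k a b l : R}
    (h : 1 + a * b = k * l) :
    ((k + 1) * a + k) * ((k + 1) * b + k) + (2 * k + 1) =
      (k + 1) * k * ((k + 1) * l + a + b) := by
  calc ((k + 1) * a + k) * ((k + 1) * b + k) + (2 * k + 1)
      = (k + 1) ^ 2 * (1 + a * b) + (k + 1) * k * (a + b) := by ring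
    _ = (k + 1) ^ 2 * (k * l) + (k + 1) * k * (a + b) := by rw [h]
    _ = (k + 1) * k * ((k + 1) * l + a + b) := by ring

theorem add_one_mul_add_one_le {K : Type*} [Field K] [LinearOrder K] [IsStrictOrderedRing K]
    {a b : K} (ha : 10 ≤ a) (hb : 10 ≤ b) :
    (a + 1) * (b + 1) ≤ 101 ^ 2 * ((10 * a + 9) * (10 * b + 9)) / 10 ^ 6 := by
  -- `(x + 1) / (10 * x + 9)` is decreasing, with value `11 / 109 < 101 / 1000` at `x = 10`.
  have add_one_le {x : K} (hx : 10 ≤ x) : x + 1 ≤ 101 / 1000 * (10 * x + 9) := by linarith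
  calc (a + 1) * (b + 1)
      ≤ (101 / 1000 * (10 * a + 9)) * (101 / 1000 * (10 * b + 9)) :=
        mul_le_mul (add_one_le ha) (add_one_le hb) (by linarith) (by linarith)
    _ = 101 ^ 2 * ((10 * a + 9) * (10 * b + 9)) / 10 ^ 6 := by ring

theorem sqrt_mul_le_half_add_s6 {x y : ℝ} (h : 0 ≤ x + y) : √(x * y) ≤ (x + y) / 2 := by
  refine Real.sqrt_le_iff.mpr ⟨by positivity, ?_⟩
  linarith [four_mul_le_sq_add x y, div_pow (x + y) 2 2]

theorem stmt_6 (p A B : ℕ) (hp10 : p % 10 = 1) (hp9 : 9 ∣ p + 10)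
    (hA : 10 ≤ A) (hAB : A < B)
    (hfac : p = (10 * A + 9) * (10 * B + 9)) :
    ∃ lam : ℕ,
      (((p - 71) / 90 : ℕ) : ℤ) - B - A + 1 = 10 * lam ∧
      1 + A * B = 9 * lam ∧
      ((((p - 71) / 90 : ℕ) : ℝ) + 1 - 101 ^ 2 * p / 10 ^ 6 ≤ (lam : ℝ) ∧
       (lam : ℝ) ≤ ((((p - 71) / 90 : ℕ) : ℝ) + 1) / 10 + (9 - Real.sqrt p) / 50) := by
  obtain ⟨lam, hlam⟩ : 9 ∣ 1 + A * B :=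
    (dvd_mul_add_succ_iff_dvd_one_add_mul 9 A B).mp (hfac ▸ hp9)
  have hp : p + 19 = 90 * (10 * lam + A + B) :=
    hfac ▸ mul_add_two_mul_add_one_eq_of_one_add_mul_eq hlam
  have hD : (p - 71) / 90 + 1 = 10 * lam + A + B := by omega
  have hD_real : (((p - 71) / 90 : ℕ) : ℝ) + 1 = 10 * lam + A + B := by exact_mod_cast hD
  have hlam_real : 1 + (A : ℝ) * B = 9 * lam := by exact_mod_cast hlam
  have hp_real : (p : ℝ) = (10 * A + 9) * (10 * B + 9) := by exact_mod_cast hfac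
  have hgap : (((p - 71) / 90 : ℕ) : ℝ) + 1 - lam = (A + 1) * (B + 1) := by
    linear_combination hD_real - hlam_real
  refine ⟨lam, by omega, hlam, ?_, ?_⟩
  · have hlower : ((A : ℝ) + 1) * (B + 1) ≤ 101 ^ 2 * p / 10 ^ 6 :=
      hp_real ▸ add_one_mul_add_one_le (by exact_mod_cast hA) (by exact_mod_cast hA.trans hAB.le)
    rwa [sub_le_comm, hgap]
  · have hsqrt : √(p : ℝ) ≤ ((10 * A + 9) + (10 * B + 9)) / 2 :=
      hp_real ▸ sqrt_mul_le_half_add_s6 (by positivity)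
    linarith
end
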